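/- Let d = 2. For every integer n ≥ 1, a(n,0) = (2n−2) · a(n−1,0) + a(n−1,1). -/

import Mathlib

/-- A generalized linear diagram on points `1,…,N` whose blocks all have size `d`:
a partition of `{1,…,N}` into blocks of size `d`. -/
def IsLinearDiagram (N d : ℕ) (P : Finset (Finset ℕ)) : Prop :=
  (∀ b ∈ P, b.card = d) ∧ (∀ b ∈ P, ∀ x ∈ b, x ∈ Finset.Icc 1 N) ∧
    ∀ x ∈ Finset.Icc 1 N, ∃! b : Finset ℕ, b ∈ P ∧ x ∈ b

/-- The number of loops of a linear diagram on points `1,…,N`: indices `i` with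
`1 ≤ i ≤ N - 1` such that `i` and `i + 1` lie in the same block. -/
noncomputable def linLoops (N : ℕ) (P : Finset (Finset ℕ)) : ℕ :=
  Set.ncard {i : ℕ | 1 ≤ i ∧ i + 1 ≤ N ∧ ∃ b ∈ P, i ∈ b ∧ i + 1 ∈ b}

/-- `numA d n k` : the number of generalized linear diagrams of order `(n,d)`
with exactly `k` loops. -/
noncomputable def numA (d n k : ℕ) : ℕ :=
  Set.ncard {P : Finset (Finset ℕ) | IsLinearDiagram (n * d) d P ∧ linLoops (n * d) P = k}

/-- `numA` with an integer loop index, zero for negative indices. -/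
noncomputable def numAZ (d n : ℕ) (k : ℤ) : ℕ :=
  if 0 ≤ k then numA d n k.toNat else 0

/-- Binomial coefficient with integer arguments: `0` when `y < 0` or `y > x`. -/
def iChoose (x y : ℤ) : ℕ :=
  if 0 ≤ y ∧ y ≤ x then x.toNat.choose y.toNat else 0

/-- A generalized chord diagram on `ZMod N` whose blocks all have size `d`:
a partition of `ZMod N` into blocks of size `d`. -/
def IsChordDiagram (N d : ℕ) (P : Finset (Finset (ZMod N))) : Prop :=
  (∀ b ∈ P, b.card = d) ∧ ∀ x : ZMod N, ∃! b : Finset (ZMod N), b ∈ P ∧ x ∈ b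

/-- A chord diagram is loopless if no residues `i`, `i+1` lie in the same block. -/
def ChordLoopless (N : ℕ) (P : Finset (Finset (ZMod N))) : Prop :=
  ∀ i : ZMod N, ∀ b ∈ P, i ∈ b → i + 1 ∈ b → False

/-- `numB d n` : the number of loopless generalized chord diagrams of order `(n,d)`. -/
noncomputable def numB (d n : ℕ) : ℕ :=
  Set.ncard {P : Finset (Finset (ZMod (n * d))) |
    IsChordDiagram (n * d) d P ∧ ChordLoopless (n * d) P}

/-- The shift `i ↦ i + v` modulo `M`, on the representatives `1,…,M`. -/
def shiftMod (M v i : ℕ) : ℕ := if i + v ≤ M then i + v else i + v - M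

/-- An `m`-symmetric linear diagram with sector size `v` and blocks of size `d`:
a partition of `{1,…,m·v}` into blocks of size `d` invariant under the shift by `v`
modulo `m·v`. -/
def IsMSymLinear (d m v : ℕ) (P : Finset (Finset ℕ)) : Prop :=
  IsLinearDiagram (m * v) d P ∧ ∀ b ∈ P, b.image (shiftMod (m * v) v) ∈ P

/-- The number of loops lying in sector `s` (sectors numbered from `0`):
indices `i` with `s·v + 1 ≤ i ≤ (s+1)·v - 1` such that `i` and `i + 1` lie
in the same block. -/
noncomputable def sectorLoops (v : ℕ) (P : Finset (Finset ℕ)) (s : ℕ) : ℕ :=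
  Set.ncard {i : ℕ | s * v + 1 ≤ i ∧ i + 1 ≤ (s + 1) * v ∧ ∃ b ∈ P, i ∈ b ∧ i + 1 ∈ b}

/-- `numAtil d m v k` : the number of `m`-symmetric linear diagrams with sector size `v`,
blocks of size `d`, and exactly `k` loops in each sector (`ã(v,k;m,d)`). -/
noncomputable def numAtil (d m v k : ℕ) : ℕ :=
  Set.ncard {P : Finset (Finset ℕ) |
    IsMSymLinear d m v P ∧ ∀ s < m, sectorLoops v P s = k}

/-! A diagram with blocks of size two on `N + 2` points is determined by the partner `i + 1` of the
last point and by the diagram on `N` points left after deleting that chord and closing the gap.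
Reinserting the chord breaks the loop at `i`, if there is one, keeps every other loop, and creates
a loop exactly when `i = N`. The result is therefore loopless iff `i < N` and the smaller diagram
has no loop (`N` choices of `i`) or its only loop is at `i` (one choice of `i`). -/

open Finset

section BlockPartition

variable {α β : Type*} {S : Finset α} {d : ℕ} {P : Finset (Finset α)} {B c : Finset α}

/-- Partitions of the finite set `S` into blocks of size `d`; linear diagrams are the case
`S = {1,…,N}`, and other ground sets appear when a block is removed. -/
def IsBlockPartition (S : Finset α) (d : ℕ) (P : Finset (Finset α)) : Prop :=
  (∀ b ∈ P, #b = d) ∧ (∀ b ∈ P, b ⊆ S) ∧ ∀ x ∈ S, ∃! b, b ∈ P ∧ x ∈ b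

open Classical in
/-- The finite set of all partitions of `S` into blocks of size `d`, over which diagrams are
counted. -/
noncomputable def blockPartitions (S : Finset α) (d : ℕ) : Finset (Finset (Finset α)) :=
  {P ∈ S.powerset.powerset | IsBlockPartition S d P}

/-- The partition obtained from `P` by renaming its points along `f`. -/
def relabelBlocks (f : α ↪ β) (P : Finset (Finset α)) : Finset (Finset β) :=
  P.map (mapEmbedding f).toEmbedding

@[simp]
theorem mem_blockPartitions : P ∈ blockPartitions S d ↔ IsBlockPartition S d P := by
  simp only [blockPartitions, mem_filter, and_iff_right_iff_imp]
  exact fun hP => mem_powerset.2 fun b hb => mem_powerset.2 (hP.2.1 b hb)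

theorem mem_relabelBlocks {f : α ↪ β} {b : Finset β} :
    b ∈ relabelBlocks f P ↔ ∃ c ∈ P, c.map f = b := by
  simp [relabelBlocks]

theorem relabelBlocks_injective (f : α ↪ β) : Function.Injective (relabelBlocks f) :=
  map_injective _

namespace IsBlockPartition

theorem eq_of_mem (hP : IsBlockPartition S d P) (hB : B ∈ P) (hc : c ∈ P) {x : α}
    (hxB : x ∈ B) (hxc : x ∈ c) : B = c :=
  (hP.2.2 x (hP.2.1 B hB hxB)).unique ⟨hB, hxB⟩ ⟨hc, hxc⟩

theorem insert [DecidableEq α] (hP : IsBlockPartition S d P) (hB : #B = d)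
    (hSB : Disjoint S B) : IsBlockPartition (S ∪ B) d (insert B P) := by
  refine ⟨forall_mem_insert _ _ _ |>.2 ⟨hB, hP.1⟩, forall_mem_insert _ _ _ |>.2
    ⟨subset_union_right, fun b hb => (hP.2.1 b hb).trans subset_union_left⟩, fun x hx => ?_⟩
  rcases mem_union.1 hx with hxS | hxB
  · obtain ⟨b, ⟨hb, hxb⟩, hunique⟩ := hP.2.2 x hxS
    refine ⟨b, ⟨mem_insert_of_mem hb, hxb⟩, fun c ⟨hc, hxc⟩ => ?_⟩
    rcases mem_insert.1 hc with rfl | hc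
    · exact absurd hxc (disjoint_left.1 hSB hxS)
    · exact hunique c ⟨hc, hxc⟩
  · refine ⟨B, ⟨mem_insert_self B P, hxB⟩, fun c ⟨hc, hxc⟩ => ?_⟩
    rcases mem_insert.1 hc with rfl | hc
    · rfl
    · exact absurd hxB (disjoint_left.1 hSB (hP.2.1 c hc hxc))

theorem erase [DecidableEq α] (hP : IsBlockPartition S d P) (hB : B ∈ P) :
    IsBlockPartition (S \ B) d (P.erase B) := by
  refine ⟨fun b hb => hP.1 b (mem_of_mem_erase hb), fun b hb x hxb => ?_, fun x hx => ?_⟩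
  · obtain ⟨hbB, hbP⟩ := mem_erase.1 hb
    exact mem_sdiff.2 ⟨hP.2.1 b hbP hxb, fun hxB => hbB (hP.eq_of_mem hbP hB hxb hxB)⟩
  · obtain ⟨hxS, hxB⟩ := mem_sdiff.1 hx
    obtain ⟨b, ⟨hb, hxb⟩, hunique⟩ := hP.2.2 x hxS
    exact ⟨b, ⟨mem_erase.2 ⟨fun h => hxB (h ▸ hxb), hb⟩, hxb⟩,
      fun c ⟨hc, hxc⟩ => hunique c ⟨mem_of_mem_erase hc, hxc⟩⟩

end IsBlockPartition

theorem isBlockPartition_relabelBlocks {f : α ↪ β} :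
    IsBlockPartition (S.map f) d (relabelBlocks f P) ↔ IsBlockPartition S d P := by
  have existsUnique_block (x : α) :
      (∃! b, b ∈ relabelBlocks f P ∧ f x ∈ b) ↔ ∃! c, c ∈ P ∧ x ∈ c := by
    constructor
    · rintro ⟨b, ⟨hb, hxb⟩, hunique⟩
      obtain ⟨c, hc, rfl⟩ := mem_relabelBlocks.1 hb
      exact ⟨c, ⟨hc, (mem_map' f).1 hxb⟩, fun c' ⟨hc', hxc'⟩ => map_injective f <|
        hunique _ ⟨mem_relabelBlocks.2 ⟨c', hc', rfl⟩, (mem_map' f).2 hxc'⟩⟩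
    · rintro ⟨c, ⟨hc, hxc⟩, hunique⟩
      refine ⟨c.map f, ⟨mem_relabelBlocks.2 ⟨c, hc, rfl⟩, (mem_map' f).2 hxc⟩, ?_⟩
      rintro b ⟨hb, hxb⟩
      obtain ⟨c', hc', rfl⟩ := mem_relabelBlocks.1 hb
      rw [hunique c' ⟨hc', (mem_map' f).1 hxb⟩]
  simp only [IsBlockPartition, forall_mem_map, existsUnique_block]
  simp [relabelBlocks]

theorem IsBlockPartition.exists_relabelBlocks_eq {f : α ↪ β} {P : Finset (Finset β)}
    (hP : IsBlockPartition (S.map f) d P) :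
    ∃ Q, IsBlockPartition S d Q ∧ relabelBlocks f Q = P := by
  have blocks_subset : P ⊆ S.powerset.map (mapEmbedding f).toEmbedding := fun b hb => by
    obtain ⟨c, hcS, rfl⟩ := subset_map_iff.1 (hP.2.1 b hb)
    exact mem_map.2 ⟨c, mem_powerset.2 hcS, rfl⟩
  obtain ⟨Q, -, rfl⟩ := subset_map_iff.1 blocks_subset
  exact ⟨Q, isBlockPartition_relabelBlocks.1 hP, rfl⟩

end BlockPartition

section Loops

/-- The loops of a set of blocks: the points `k` such that `k` and `k + 1` share a block. -/
def loops (P : Finset (Finset ℕ)) : Finset ℕ :=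
  P.biUnion fun b => {k ∈ b | k + 1 ∈ b}

/-- The order embedding of `ℕ` whose range omits exactly `i + 1`: it opens a gap just after `i`. -/
def openGap (i : ℕ) : ℕ ↪ ℕ where
  toFun k := if k ≤ i then k else k + 1
  inj' k l h := by grind

variable {i k l : ℕ} {P : Finset (Finset ℕ)}

theorem mem_loops : k ∈ loops P ↔ ∃ b ∈ P, k ∈ b ∧ k + 1 ∈ b := by
  simp [loops]

theorem loops_insert (B : Finset ℕ) (P : Finset (Finset ℕ)) :
    loops (insert B P) = loops {B} ∪ loops P := by
  simp [loops]

theorem loops_pair_eq_empty {a b : ℕ} (hab : a < b) : loops {{a, b}} = ∅ ↔ b ≠ a + 1 := by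
  simp only [eq_empty_iff_forall_notMem, mem_loops, mem_singleton, exists_eq_left, mem_insert]
  exact ⟨fun h hb => h a (by lia), fun hb k => by lia⟩

theorem openGap_apply : openGap i k = if k ≤ i then k else k + 1 := rfl

theorem openGap_eq_openGap_add_one : openGap i l = openGap i k + 1 ↔ l = k + 1 ∧ k ≠ i := by
  grind [openGap_apply]

theorem loops_relabelBlocks_openGap (i : ℕ) (P : Finset (Finset ℕ)) :
    loops (relabelBlocks (openGap i) P) = ((loops P).erase i).map (openGap i) := by
  ext m
  simp only [mem_loops, mem_relabelBlocks, mem_map, mem_erase]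
  constructor
  · rintro ⟨_, ⟨c, hc, rfl⟩, hm, hm'⟩
    obtain ⟨k, hk, rfl⟩ := mem_map.1 hm
    obtain ⟨l, hl, hlk⟩ := mem_map.1 hm'
    obtain ⟨rfl, hki⟩ := openGap_eq_openGap_add_one.1 hlk
    exact ⟨k, ⟨hki, c, hc, hk, hl⟩, rfl⟩
  · rintro ⟨k, ⟨hki, c, hc, hk, hk'⟩, rfl⟩
    refine ⟨c.map (openGap i), ⟨c, hc, rfl⟩, mem_map_of_mem _ hk, ?_⟩
    rw [← openGap_eq_openGap_add_one.2 ⟨rfl, hki⟩]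
    exact mem_map_of_mem _ hk'

theorem IsBlockPartition.loops_subset {N d : ℕ} (hP : IsBlockPartition (Icc 1 N) d P) :
    loops P ⊆ Ico 1 N := fun k hk => by
  obtain ⟨b, hb, hkb, hkb'⟩ := mem_loops.1 hk
  have hk := mem_Icc.1 (hP.2.1 b hb hkb)
  have hk' := mem_Icc.1 (hP.2.1 b hb hkb')
  exact mem_Ico.2 ⟨hk.1, hk'.2⟩

end Loops

section InsertChord

variable {N i : ℕ} {P Q : Finset (Finset ℕ)}

/-- The diagram on `N + 2` points obtained from the diagram `Q` on `N` points by joining a new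
point, inserted just after `i`, to a new last point. -/
def insertChord (N i : ℕ) (Q : Finset (Finset ℕ)) : Finset (Finset ℕ) :=
  insert {i + 1, N + 2} (relabelBlocks (openGap i) Q)

theorem chord_notMem_relabelBlocks_openGap (N i : ℕ) (Q : Finset (Finset ℕ)) :
    {i + 1, N + 2} ∉ relabelBlocks (openGap i) Q := fun h => by
  obtain ⟨c, -, hc⟩ := mem_relabelBlocks.1 h
  obtain ⟨k, -, hk⟩ := mem_map.1 (hc ▸ mem_insert_self (i + 1) {N + 2})
  grind [openGap_apply]

theorem disjoint_map_openGap_chord (N i : ℕ) :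
    Disjoint ((Icc 1 N).map (openGap i)) {i + 1, N + 2} := by
  simp only [disjoint_left, mem_map, mem_Icc, openGap_apply, mem_insert, mem_singleton]
  grind

theorem map_openGap_union_chord (hi : i ≤ N) :
    (Icc 1 N).map (openGap i) ∪ {i + 1, N + 2} = Icc 1 (N + 2) := by
  ext m
  simp only [mem_union, mem_map, mem_Icc, openGap_apply, mem_insert, mem_singleton]
  constructor
  · grind
  · intro hm
    by_cases hmi : m ≤ i
    · exact .inl ⟨m, by grind⟩
    · by_cases hmc : m = i + 1 ∨ m = N + 2
      · exact .inr hmc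
      · exact .inl ⟨m - 1, by grind⟩

theorem isBlockPartition_insertChord (hi : i ≤ N) (hQ : IsBlockPartition (Icc 1 N) 2 Q) :
    IsBlockPartition (Icc 1 (N + 2)) 2 (insertChord N i Q) := by
  rw [← map_openGap_union_chord hi]
  exact (isBlockPartition_relabelBlocks.2 hQ).insert (card_pair (by lia))
    (disjoint_map_openGap_chord N i)

theorem IsBlockPartition.exists_insertChord_eq (hP : IsBlockPartition (Icc 1 (N + 2)) 2 P) :
    ∃ i ≤ N, ∃ Q, IsBlockPartition (Icc 1 N) 2 Q ∧ insertChord N i Q = P := by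
  obtain ⟨B, ⟨hB, hlast⟩, -⟩ := hP.2.2 (N + 2) (by simp)
  obtain ⟨j, hj⟩ : ∃ j, B.erase (N + 2) = {j} := by
    rw [← card_eq_one, card_erase_of_mem hlast, hP.1 B hB]
  have hjB : j ∈ B.erase (N + 2) := hj ▸ mem_singleton_self j
  have hjN : j ≠ N + 2 ∧ 1 ≤ j ∧ j ≤ N + 2 := by
    simpa using And.intro (ne_of_mem_erase hjB) (hP.2.1 B hB (mem_of_mem_erase hjB))
  obtain ⟨i, rfl⟩ : ∃ i, j = i + 1 := ⟨j - 1, by lia⟩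
  have hi : i ≤ N := by lia
  obtain rfl : B = {i + 1, N + 2} := by rw [← insert_erase hlast, hj, pair_comm]
  have hrest := hP.erase hB
  rw [← map_openGap_union_chord hi,
    union_sdiff_cancel_right (disjoint_map_openGap_chord N i)] at hrest
  obtain ⟨Q, hQ, hQP⟩ := hrest.exists_relabelBlocks_eq
  exact ⟨i, hi, Q, hQ, by rw [insertChord, hQP, insert_erase hB]⟩

theorem insertChord_inj {i' : ℕ} {Q' : Finset (Finset ℕ)} (hi : i ≤ N)
    (hQ : IsBlockPartition (Icc 1 N) 2 Q)
    (h : insertChord N i Q = insertChord N i' Q') : i = i' ∧ Q = Q' := by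
  have hchord : ({i + 1, N + 2} : Finset ℕ) = {i' + 1, N + 2} :=
    (isBlockPartition_insertChord hi hQ).eq_of_mem (x := N + 2)
      (mem_insert_self _ _) (h ▸ mem_insert_self _ _) (by simp) (by simp)
  obtain rfl : i = i' := by
    have : i + 1 ∈ ({i' + 1, N + 2} : Finset ℕ) := hchord ▸ mem_insert_self _ _
    simp only [mem_insert, mem_singleton] at this
    lia
  refine ⟨rfl, relabelBlocks_injective (openGap i) ?_⟩
  rw [← erase_insert (chord_notMem_relabelBlocks_openGap N i Q),
    ← erase_insert (chord_notMem_relabelBlocks_openGap N i Q')]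
  exact congrArg (Finset.erase · _) h

theorem loops_insertChord_eq_empty (hi : i ≤ N) :
    loops (insertChord N i Q) = ∅ ↔ i < N ∧ (loops Q = ∅ ∨ loops Q = {i}) := by
  have hne : N + 2 ≠ i + 1 + 1 ↔ i < N := by lia
  rw [insertChord, loops_insert, union_eq_empty, loops_pair_eq_empty (by lia), hne,
    loops_relabelBlocks_openGap, map_eq_empty, erase_eq_empty_iff]

end InsertChord

section Counting

theorem isLinearDiagram_iff {N d : ℕ} {P : Finset (Finset ℕ)} :
    IsLinearDiagram N d P ↔ IsBlockPartition (Icc 1 N) d P := Iff.rfl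

theorem IsBlockPartition.linLoops_eq {N d : ℕ} {P : Finset (Finset ℕ)}
    (hP : IsBlockPartition (Icc 1 N) d P) : linLoops N P = #(loops P) := by
  rw [linLoops, ← Set.ncard_coe_finset]
  congr 1
  ext k
  rw [mem_coe, ← and_iff_right_of_imp (a := k ∈ Ico 1 N) (fun h => hP.loops_subset h),
    mem_Ico, mem_loops, and_assoc]
  rfl

theorem numA_eq_card (d n k : ℕ) :
    numA d n k = #{P ∈ blockPartitions (Icc 1 (n * d)) d | #(loops P) = k} := by
  rw [numA, ← Set.ncard_coe_finset]
  congr 1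
  ext P
  simp only [Set.mem_ofPred_eq, coe_filter, mem_blockPartitions, isLinearDiagram_iff]
  exact and_congr_right fun hP => by rw [hP.linLoops_eq]

theorem card_loopless_eq_card_pairs (N : ℕ) :
    #{P ∈ blockPartitions (Icc 1 (N + 2)) 2 | loops P = ∅} =
      #{p ∈ range N ×ˢ blockPartitions (Icc 1 N) 2 | loops p.2 = ∅ ∨ loops p.2 = {p.1}} := by
  symm
  apply card_nbij fun p => insertChord N p.1 p.2
  · rintro ⟨i, Q⟩ hp
    simp only [coe_filter, mem_product, mem_range, mem_blockPartitions, Set.mem_ofPred_eq] at hp ⊢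
    obtain ⟨⟨hi, hQ⟩, hloops⟩ := hp
    exact ⟨isBlockPartition_insertChord hi.le hQ,
      (loops_insertChord_eq_empty hi.le).2 ⟨hi, hloops⟩⟩
  · rintro ⟨i, Q⟩ hp ⟨i', Q'⟩ - h
    simp only [coe_filter, mem_product, mem_range, mem_blockPartitions, Set.mem_ofPred_eq] at hp
    obtain ⟨rfl, rfl⟩ := insertChord_inj hp.1.1.le hp.1.2 h
    rfl
  · intro P hP
    simp only [coe_filter, mem_blockPartitions, Set.mem_ofPred_eq] at hP
    obtain ⟨i, hi, Q, hQ, rfl⟩ := hP.1.exists_insertChord_eq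
    obtain ⟨hiN, hloops⟩ := (loops_insertChord_eq_empty hi).1 hP.2
    exact ⟨(i, Q), by simp [hiN, hQ, hloops], rfl⟩

theorem card_pairs_loops_eq_singleton (N d : ℕ) :
    #{p ∈ range N ×ˢ blockPartitions (Icc 1 N) d | loops p.2 = {p.1}} =
      #{Q ∈ blockPartitions (Icc 1 N) d | #(loops Q) = 1} := by
  apply card_nbij Prod.snd
  · rintro ⟨i, Q⟩ hp
    simp only [coe_filter, mem_product, Set.mem_ofPred_eq] at hp ⊢
    exact ⟨hp.1.2, card_eq_one.2 ⟨i, hp.2⟩⟩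
  · rintro ⟨i, Q⟩ hp ⟨i', _⟩ hp' rfl
    simp only [coe_filter, Set.mem_ofPred_eq] at hp hp'
    rw [singleton_injective (hp.2.symm.trans hp'.2)]
  · intro Q hQ
    simp only [coe_filter, mem_blockPartitions, Set.mem_ofPred_eq] at hQ
    obtain ⟨i, hi⟩ := card_eq_one.1 hQ.2
    have hiN : i ∈ Ico 1 N := hQ.1.loops_subset (hi ▸ mem_singleton_self i)
    exact ⟨(i, Q), by simp [(mem_Ico.1 hiN).2, hQ.1, hi], rfl⟩

theorem card_loopless_add_two (N : ℕ) :
    #{P ∈ blockPartitions (Icc 1 (N + 2)) 2 | loops P = ∅} =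
      N * #{Q ∈ blockPartitions (Icc 1 N) 2 | loops Q = ∅} +
        #{Q ∈ blockPartitions (Icc 1 N) 2 | #(loops Q) = 1} := by
  rw [card_loopless_eq_card_pairs, filter_or, card_union_of_disjoint, card_pairs_loops_eq_singleton,
    filter_product_right (q := fun Q => loops Q = ∅), card_product, card_range]
  rw [disjoint_filter]
  intro p _ hempty hsingle
  exact singleton_ne_empty p.1 (hsingle.symm.trans hempty)

end Counting

/-- for `d = 2` and `n ≥ 1`, `a(n,0) = (2n−2)·a(n−1,0) + a(n−1,1)`. -/
theorem linear_rec_two_zero (n : ℕ) (hn : 1 ≤ n) :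
    numA 2 n 0 = (2 * n - 2) * numA 2 (n - 1) 0 + numA 2 (n - 1) 1 := by
  obtain ⟨m, rfl⟩ := Nat.exists_eq_add_of_le' hn
  have hpoints : (m + 1) * 2 = m * 2 + 2 := by ring
  have hcoeff : 2 * (m + 1) - 2 = m * 2 := by lia
  simp only [numA_eq_card, card_eq_zero, hpoints, hcoeff, Nat.add_sub_cancel]
  exact card_loopless_add_two (m * 2)
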